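/- Let ω ⊂ ℝ^d be a nonempty open connected set, v : ℝ^d → ℝ^d a Lipschitz, uniformly bounded vector field, and S a nonempty open convex set strictly included in ω. Let μ⁰, μ¹ be compactly supported probability measures on ℝ^d with supp(μ⁰) ⊂ S and supp(μ¹) ⊂ S, and let δ > 0. Then there exists a pair (𝟙_ω u, μ) consisting of a Borel vector field 𝟙_ω u : ℝ^d × ℝ⁺ → ℝ^d vanishing outside ω and a time-evolving compactly supported measure μ, such that (μ, v + 𝟙_ω u) is a weak solution of ∂_t μ + ∇·((v + 𝟙_ω u) μ) = 0 on [0, δ] with μ(0) = μ⁰, supp(μ(t)) ⊂ S for all t ∈ [0, δ], and μ(δ) = μ¹. -/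

import Mathlib

open MeasureTheory Set
open scoped ENNReal NNReal

noncomputable section

/-- The Euclidean space `ℝ^d`. -/
abbrev Euc (d : ℕ) := EuclideanSpace ℝ (Fin d)

/-- The support of a Borel measure: points all of whose open neighborhoods have
positive measure. -/
def msupport {d : ℕ} (μ : Measure (Euc d)) : Set (Euc d) :=
  {x | ∀ U : Set (Euc d), IsOpen U → x ∈ U → 0 < μ U}

/-- `(μ, w)` is a weak solution of the continuity equation
`∂ₜ μ + ∇·(w μ) = 0` on the time interval `[0, T]`. -/
def IsWeakSolutionOn {d : ℕ} (T : ℝ) (w : Euc d → ℝ → Euc d)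
    (μ : ℝ → Measure (Euc d)) : Prop :=
  (∫⁻ t in Icc (0:ℝ) T, ∫⁻ x, (‖w x t‖₊ : ℝ≥0∞) ∂(μ t)) < ⊤ ∧
  ∀ ψ : Euc d → ℝ, ContDiff ℝ (⊤ : ℕ∞) ψ → HasCompactSupport ψ →
    ∀ t ∈ Icc (0:ℝ) T,
      (∫ x, ψ x ∂(μ t)) - (∫ x, ψ x ∂(μ 0))
        = ∫ s in Icc (0:ℝ) t, (∫ x, (inner ℝ (gradient ψ x) (w x s) : ℝ) ∂(μ s))

/-!
Superposition: if the random curves `t ↦ X t a` solve `ẋ = w(x, t)` almost surely and their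
expected length is finite, then integrating the chain rule for `ψ (X t a)` in `a` (Fubini) shows
that the laws of `X t` solve the continuity equation for `w`.

To steer `μ0` to `μ1`, draw the endpoints `(p₁, p₂)` from the product `μ0 ⊗ μ1`, fix `o ∈ S`, and
run at constant speed along the segment from `p₁` to `o` during the first half of the time and
along the segment from `o` to `p₂` during the second half. By convexity the curves stay in `S`.
In each half the distance to `o` along a segment is proportional to `|t - c|`, where `c` is the
middle time, so a curve at position `z` at time `t` has velocity `(z - o) / (t - c)`: a function of
`z` and `t` alone, although the curves all cross at `o`. The control is the difference between this
field and `v`, cut off outside `ω`.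
-/

section Support

variable {d : ℕ}

lemma msupport_eq_support (μ : Measure (Euc d)) : msupport μ = μ.support := by
  simp only [Measure.support_eq_forall_isOpen, msupport, imp.swap]

lemma ae_mem_msupport (μ : Measure (Euc d)) : ∀ᵐ x ∂μ, x ∈ msupport μ := by
  rw [msupport_eq_support]
  exact Measure.support_mem_ae

lemma isClosed_msupport (μ : Measure (Euc d)) : IsClosed (msupport μ) := by
  rw [msupport_eq_support]
  exact μ.isClosed_support

lemma msupport_map_subset_image {α : Type*} [TopologicalSpace α] [MeasurableSpace α]
    [OpensMeasurableSpace α] {P : Measure α} {K : Set α} (hK : IsCompact K) (hPK : ∀ᵐ a ∂P, a ∈ K)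
    {f : α → Euc d} (hf : Continuous f) : msupport (P.map f) ⊆ f '' K := by
  rw [msupport_eq_support]
  have hfK : IsClosed (f '' K) := (hK.image hf).isClosed
  refine Measure.support_subset_of_isClosed hfK
    ((ae_map_iff hf.measurable.aemeasurable hfK.measurableSet).2 ?_)
  filter_upwards [hPK] with a ha using mem_image_of_mem f ha

lemma isCompact_msupport_map {α : Type*} [TopologicalSpace α] [MeasurableSpace α]
    [OpensMeasurableSpace α] {P : Measure α} {K : Set α} (hK : IsCompact K) (hPK : ∀ᵐ a ∂P, a ∈ K)
    {f : α → Euc d} (hf : Continuous f) : IsCompact (msupport (P.map f)) :=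
  (hK.image hf).of_isClosed_subset (isClosed_msupport _) (msupport_map_subset_image hK hPK hf)

end Support

section Gradient

variable {E : Type*} [NormedAddCommGroup E] [InnerProductSpace ℝ E] [CompleteSpace E]
  {ψ : E → ℝ}

lemma continuous_gradient (hψ : ContDiff ℝ 1 ψ) : Continuous (gradient ψ) :=
  (InnerProductSpace.toDual ℝ E).symm.continuous.comp (hψ.continuous_fderiv one_ne_zero)

lemma exists_norm_gradient_le (hψ : ContDiff ℝ 1 ψ) (hψc : HasCompactSupport ψ) :
    ∃ M, ∀ x, ‖gradient ψ x‖ ≤ M := by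
  obtain ⟨M, hM⟩ :=
    (hψc.fderiv (𝕜 := ℝ)).exists_bound_of_continuous (hψ.continuous_fderiv one_ne_zero)
  exact ⟨M, fun x => by simpa only [gradient, LinearIsometryEquiv.norm_map] using hM x⟩

lemma setIntegral_inner_gradient_eq_sub (hψ : ContDiff ℝ 1 ψ) {γ γ' : ℝ → E} {T : ℝ} (hT : 0 ≤ T)
    {D : Set ℝ} (hD : D.Countable) (hγ : ContinuousOn γ (Icc 0 T))
    (hγ' : ∀ t ∈ Ioo 0 T \ D, HasDerivAt γ (γ' t) t)
    (hint : IntegrableOn (fun t => inner ℝ (gradient ψ (γ t)) (γ' t)) (Icc 0 T)) :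
    ∫ t in Icc 0 T, inner ℝ (gradient ψ (γ t)) (γ' t) = ψ (γ T) - ψ (γ 0) := by
  rw [integral_Icc_eq_integral_Ioc, ← intervalIntegral.integral_of_le hT]
  refine integral_eq_of_hasDerivAt_off_countable_of_le (fun t => ψ (γ t)) _ hT hD
    (hψ.continuous.comp_continuousOn hγ) (fun t ht => ?_)
    ((intervalIntegrable_iff_integrableOn_Icc_of_le hT).2 hint)
  rw [inner_gradient_left]
  exact (hψ.differentiable one_ne_zero _).hasFDerivAt.comp_hasDerivAt t (hγ' t ht)

end Gradient

section Superposition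

variable {α : Type*} [MeasurableSpace α] {P : Measure α}
  {E : Type*} [NormedAddCommGroup E] {T : ℝ}

lemma setLIntegral_lintegral_enorm_lt_top [IsFiniteMeasure P] {f : ℝ → α → E} {C : ℝ}
    (hC : ∀ᵐ a ∂P, ∀ t ∈ Icc 0 T, ‖f t a‖ ≤ C) :
    ∫⁻ t in Icc 0 T, ∫⁻ a, ‖f t a‖ₑ ∂P < ⊤ := by
  have hinner (t : ℝ) (ht : t ∈ Icc 0 T) :
      ∫⁻ a, ‖f t a‖ₑ ∂P ≤ ENNReal.ofReal C * P univ := by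
    refine (lintegral_mono_ae ?_).trans_eq (lintegral_const _)
    filter_upwards [hC] with a ha
    exact (ofReal_norm _).symm.trans_le (ENNReal.ofReal_le_ofReal (ha t ht))
  refine (setLIntegral_mono measurable_const hinner).trans_lt ?_
  rw [setLIntegral_const]
  exact ENNReal.mul_lt_top (ENNReal.mul_lt_top ENNReal.ofReal_lt_top (measure_lt_top P univ))
    measure_Icc_lt_top

variable [MeasurableSpace E] [BorelSpace E] [SecondCountableTopology E]
  {w : E → ℝ → E} {X : ℝ → α → E}

lemma integrable_velocity_along [SFinite P] (hw : Measurable (Function.uncurry w))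
    (hX : Measurable (Function.uncurry X))
    (hlen : ∫⁻ t in Icc 0 T, ∫⁻ a, ‖w (X t a) t‖ₑ ∂P < ⊤) :
    Integrable (fun q : ℝ × α => w (X q.1 q.2) q.1) ((volume.restrict (Icc 0 T)).prod P) := by
  have hmeas : Measurable fun q : ℝ × α => w (X q.1 q.2) q.1 :=
    hw.comp (hX.prodMk measurable_fst)
  refine ⟨hmeas.aestronglyMeasurable, ?_⟩
  rwa [hasFiniteIntegral_iff_enorm, lintegral_prod _ hmeas.enorm.aemeasurable]

variable [InnerProductSpace ℝ E] [CompleteSpace E] {ψ : E → ℝ}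

lemma integrable_inner_gradient_velocity_along [SFinite P] (hψ : ContDiff ℝ 1 ψ)
    (hψc : HasCompactSupport ψ) (hw : Measurable (Function.uncurry w))
    (hX : Measurable (Function.uncurry X))
    (hlen : ∫⁻ t in Icc 0 T, ∫⁻ a, ‖w (X t a) t‖ₑ ∂P < ⊤) :
    Integrable (fun q : ℝ × α => inner ℝ (gradient ψ (X q.1 q.2)) (w (X q.1 q.2) q.1))
      ((volume.restrict (Icc 0 T)).prod P) := by
  obtain ⟨M, hM⟩ := exists_norm_gradient_le hψ hψc
  have hvel := integrable_velocity_along hw hX hlen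
  have hgrad : Measurable fun q : ℝ × α => gradient ψ (X q.1 q.2) :=
    (continuous_gradient hψ).measurable.comp hX
  refine (hvel.norm.const_mul M).mono' (hgrad.aestronglyMeasurable.inner hvel.1) (.of_forall ?_)
  exact fun q => (norm_inner_le_norm _ _).trans (mul_le_mul_of_nonneg_right (hM _) (norm_nonneg _))

lemma integral_map_sub_integral_map [IsFiniteMeasure P]
    (hw : Measurable (Function.uncurry w)) (hX : Measurable (Function.uncurry X))
    (hcont : ∀ᵐ a ∂P, ContinuousOn (X · a) (Icc 0 T)) {D : Set ℝ} (hD : D.Countable)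
    (hode : ∀ᵐ a ∂P, ∀ t ∈ Ioo 0 T \ D, HasDerivAt (X · a) (w (X t a) t) t)
    (hlen : ∫⁻ t in Icc 0 T, ∫⁻ a, ‖w (X t a) t‖ₑ ∂P < ⊤) (hT : 0 ≤ T)
    (hψ : ContDiff ℝ 1 ψ) (hψc : HasCompactSupport ψ) :
    ∫ x, ψ x ∂(P.map (X T)) - ∫ x, ψ x ∂(P.map (X 0)) =
      ∫ s in Icc 0 T, ∫ x, inner ℝ (gradient ψ x) (w x s) ∂(P.map (X s)) := by
  have hXt (t : ℝ) : Measurable (X t) := hX.of_uncurry_left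
  have hint := integrable_inner_gradient_velocity_along hψ hψc hw hX hlen
  obtain ⟨B, hB⟩ := hψc.exists_bound_of_continuous hψ.continuous
  have hψX (t : ℝ) : Integrable (fun a => ψ (X t a)) P :=
    .of_bound (hψ.continuous.measurable.comp (hXt t)).aestronglyMeasurable B
      (.of_forall fun _ => hB _)
  calc ∫ x, ψ x ∂(P.map (X T)) - ∫ x, ψ x ∂(P.map (X 0))
      = ∫ a, (ψ (X T a) - ψ (X 0 a)) ∂P := by
        rw [integral_sub (hψX T) (hψX 0),
          integral_map (hXt T).aemeasurable hψ.continuous.aestronglyMeasurable,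
          integral_map (hXt 0).aemeasurable hψ.continuous.aestronglyMeasurable]
    _ = ∫ a, (∫ s in Icc 0 T, inner ℝ (gradient ψ (X s a)) (w (X s a) s)) ∂P := by
        refine integral_congr_ae ?_
        filter_upwards [hcont, hode, hint.prod_left_ae] with a hcont hode hint
        exact (setIntegral_inner_gradient_eq_sub hψ hT hD hcont hode hint).symm
    _ = ∫ s in Icc 0 T, ∫ a, inner ℝ (gradient ψ (X s a)) (w (X s a) s) ∂P :=
        (integral_integral_swap hint).symm
    _ = ∫ s in Icc 0 T, ∫ x, inner ℝ (gradient ψ x) (w x s) ∂(P.map (X s)) := by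
        refine integral_congr_ae (.of_forall fun s => ?_)
        refine (integral_map (f := fun x => inner ℝ (gradient ψ x) (w x s)) (hXt s).aemeasurable
          (Measurable.aestronglyMeasurable ?_)).symm
        exact (continuous_gradient hψ).measurable.inner hw.of_uncurry_right

theorem isWeakSolutionOn_map [IsFiniteMeasure P] {d : ℕ} {w : Euc d → ℝ → Euc d}
    {X : ℝ → α → Euc d} (hw : Measurable (Function.uncurry w))
    (hX : Measurable (Function.uncurry X)) (hcont : ∀ᵐ a ∂P, ContinuousOn (X · a) (Icc 0 T))
    {D : Set ℝ} (hD : D.Countable)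
    (hode : ∀ᵐ a ∂P, ∀ t ∈ Ioo 0 T \ D, HasDerivAt (X · a) (w (X t a) t) t)
    (hlen : ∫⁻ t in Icc 0 T, ∫⁻ a, ‖w (X t a) t‖ₑ ∂P < ⊤) :
    IsWeakSolutionOn T w (fun t => P.map (X t)) := by
  refine ⟨?_, fun ψ hψ hψc t ht => ?_⟩
  · refine lt_of_eq_of_lt (lintegral_congr fun t => ?_) hlen
    exact lintegral_map hw.of_uncurry_right.enorm hX.of_uncurry_left
  · have hIcc : Icc 0 t ⊆ Icc 0 T := Icc_subset_Icc_right ht.2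
    refine integral_map_sub_integral_map hw hX (hcont.mono fun a ha => ha.mono hIcc) hD ?_
      ((lintegral_mono_set hIcc).trans_lt hlen) ht.1 (hψ.of_le (mod_cast le_top)) hψc
    filter_upwards [hode] with a ha s hs
    exact ha s ⟨Ioo_subset_Ioo_right ht.2 hs.1, hs.2⟩

end Superposition

section PathThrough

variable {E : Type*} [AddCommGroup E] [Module ℝ E]

/-- The broken line which, for `s` from `-1` to `1`, runs from `p.1` straight to `o` (reached at
`s = 0`) and then straight to `p.2`. Writing it with the negative and positive part of `s` makes
it continuous in `(s, p)` without a gluing argument. -/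
def pathThrough (o : E) (s : ℝ) (p : E × E) : E := o + s⁻ • (p.1 - o) + s⁺ • (p.2 - o)

variable {o : E} {s : ℝ} {p : E × E}

lemma pathThrough_of_nonpos (hs : s ≤ 0) : pathThrough o s p = o + (-s) • (p.1 - o) := by
  simp [pathThrough, posPart_eq_zero.2 hs, negPart_eq_neg.2 hs]

lemma pathThrough_of_nonneg (hs : 0 ≤ s) : pathThrough o s p = o + s • (p.2 - o) := by
  simp [pathThrough, posPart_eq_self.2 hs, negPart_eq_zero.2 hs]

@[simp] lemma pathThrough_neg_one : pathThrough o (-1) p = p.1 := by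
  simp [pathThrough_of_nonpos]

@[simp] lemma pathThrough_one : pathThrough o 1 p = p.2 := by
  simp [pathThrough_of_nonneg]

@[fun_prop]
lemma continuous_pathThrough [TopologicalSpace E] [IsTopologicalAddGroup E]
    [ContinuousSMul ℝ E] {α : Type*} [TopologicalSpace α] {f : α → ℝ} {g : α → E × E}
    (hf : Continuous f) (hg : Continuous g) : Continuous fun a => pathThrough o (f a) (g a) := by
  have hneg : Continuous fun a => (f a)⁻ := continuous_negPart.comp hf
  have hpos : Continuous fun a => (f a)⁺ := continuous_posPart.comp hf
  exact (continuous_const.add (hneg.smul (by fun_prop))).add (hpos.smul (by fun_prop))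

lemma pathThrough_mem {S : Set E} (hS : Convex ℝ S) (ho : o ∈ S) (hp : p ∈ S ×ˢ S)
    (hs : s ∈ Icc (-1) 1) : pathThrough o s p ∈ S := by
  rcases le_total s 0 with hs0 | hs0
  · rw [pathThrough_of_nonpos hs0]
    exact hS.add_smul_sub_mem ho hp.1 ⟨neg_nonneg.2 hs0, neg_le.1 hs.1⟩
  · rw [pathThrough_of_nonneg hs0]
    exact hS.add_smul_sub_mem ho hp.2 ⟨hs0, hs.2⟩

lemma pathThrough_mem_of_mem_Icc {S : Set E} {δ t : ℝ} (hS : Convex ℝ S) (ho : o ∈ S)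
    (hp : p ∈ S ×ˢ S) (hδ : 0 < δ) (ht : t ∈ Icc 0 δ) : pathThrough o (2 / δ * t - 1) p ∈ S := by
  have h0 : 0 ≤ 2 / δ * t := mul_nonneg (by positivity) ht.1
  have h2 : 2 / δ * t ≤ 2 := by
    rw [div_mul_eq_mul_div, div_le_iff₀ hδ]
    linarith [ht.2]
  exact pathThrough_mem hS ho hp ⟨by linarith, by linarith⟩

end PathThrough

section PathThroughVelocity

variable {E : Type*} [NormedAddCommGroup E] [NormedSpace ℝ E] {o : E} {s : ℝ} {p : E × E}

lemma hasDerivAt_pathThrough (hs : s ≠ 0) :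
    HasDerivAt (pathThrough o · p) (s⁻¹ • (pathThrough o s p - o)) s := by
  rcases hs.lt_or_gt with hs0 | hs0
  · have hvel : s⁻¹ • (pathThrough o s p - o) = (-1 : ℝ) • (p.1 - o) := by
      simp [pathThrough_of_nonpos hs0.le, smul_smul, hs]
    rw [hvel]
    refine (((hasDerivAt_neg s).smul_const (p.1 - o)).const_add o).congr_of_eventuallyEq ?_
    filter_upwards [Iio_mem_nhds hs0] with r hr using pathThrough_of_nonpos (le_of_lt hr)
  · have hvel : s⁻¹ • (pathThrough o s p - o) = (1 : ℝ) • (p.2 - o) := by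
      simp [pathThrough_of_nonneg hs0.le, smul_smul, hs]
    rw [hvel]
    refine (((hasDerivAt_id s).smul_const (p.2 - o)).const_add o).congr_of_eventuallyEq ?_
    filter_upwards [Ioi_mem_nhds hs0] with r hr using pathThrough_of_nonneg (le_of_lt hr)

lemma norm_inv_smul_pathThrough_sub_le :
    ‖s⁻¹ • (pathThrough o s p - o)‖ ≤ ‖p.1 - o‖ + ‖p.2 - o‖ := by
  rcases lt_trichotomy s 0 with hs | rfl | hs
  · simp [pathThrough_of_nonpos hs.le, smul_smul, hs.ne, norm_sub_rev o]
  · simpa using add_nonneg (norm_nonneg (p.1 - o)) (norm_nonneg (p.2 - o))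
  · simp [pathThrough_of_nonneg hs.le, smul_smul, hs.ne']

end PathThroughVelocity

section RadialField

/-- The velocity at position `z` and time `t` of the curves `pathThrough o`, run over the time
interval `[0, δ]` with parameter `s = 2 / δ * t - 1`. This is the field `(z - o) / (t - δ / 2)`,
set to `0` at the middle time by the convention `0⁻¹ = 0`. -/
def radialField {E : Type*} [AddCommGroup E] [Module ℝ E] (o : E) (δ : ℝ) (z : E) (t : ℝ) :
    E :=
  (2 / δ) • (2 / δ * t - 1)⁻¹ • (z - o)

variable {E : Type*} [NormedAddCommGroup E] [NormedSpace ℝ E] {o : E} {δ t : ℝ} {p : E × E}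

lemma hasDerivAt_pathThrough_radialField (hδ : δ ≠ 0) (ht : t ≠ δ / 2) :
    HasDerivAt (fun t => pathThrough o (2 / δ * t - 1) p)
      (radialField o δ (pathThrough o (2 / δ * t - 1) p) t) t := by
  have hs : 2 / δ * t - 1 ≠ 0 := by
    contrapose! ht
    field_simp at ht
    linarith
  have hclock : HasDerivAt (fun t : ℝ => 2 / δ * t - 1) (2 / δ) t := by
    simpa using ((hasDerivAt_id t).const_mul (2 / δ)).sub_const 1
  exact (hasDerivAt_pathThrough (o := o) (p := p) hs).scomp t hclock

lemma norm_radialField_pathThrough_le :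
    ‖radialField o δ (pathThrough o (2 / δ * t - 1) p) t‖ ≤
      ‖2 / δ‖ * (‖p.1 - o‖ + ‖p.2 - o‖) := by
  rw [radialField, norm_smul]
  exact mul_le_mul_of_nonneg_left norm_inv_smul_pathThrough_sub_le (norm_nonneg _)

end RadialField

section Steering

variable {d : ℕ} {S : Set (Euc d)} {o : Euc d} {δ : ℝ}

theorem isWeakSolutionOn_map_pathThrough {P : Measure (Euc d × Euc d)} [IsFiniteMeasure P]
    {K : Set (Euc d × Euc d)} (hK : IsCompact K) (hPK : ∀ᵐ p ∂P, p ∈ K) (hKS : K ⊆ S ×ˢ S)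
    (hS : Convex ℝ S) (ho : o ∈ S) (hδ : 0 < δ) {w : Euc d → ℝ → Euc d}
    (hw : Measurable (Function.uncurry w)) (hwS : ∀ z ∈ S, ∀ t, w z t = radialField o δ z t) :
    IsWeakSolutionOn δ w (fun t => P.map (pathThrough o (2 / δ * t - 1))) := by
  have hX : Continuous fun q : ℝ × (Euc d × Euc d) => pathThrough o (2 / δ * q.1 - 1) q.2 := by
    fun_prop
  have hwX {p} (hp : p ∈ K) {t} (ht : t ∈ Icc 0 δ) :
      w (pathThrough o (2 / δ * t - 1) p) t =
        radialField o δ (pathThrough o (2 / δ * t - 1) p) t :=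
    hwS _ (pathThrough_mem_of_mem_Icc hS ho (hKS hp) hδ ht) t
  obtain ⟨R, hR⟩ := hK.exists_bound_of_continuousOn (f := fun p => ‖p.1 - o‖ + ‖p.2 - o‖)
    (by fun_prop)
  refine isWeakSolutionOn_map hw hX.measurable (.of_forall fun p => ?_)
    (countable_singleton (δ / 2)) ?_ (setLIntegral_lintegral_enorm_lt_top (C := ‖2 / δ‖ * R) ?_)
  · fun_prop
  · filter_upwards [hPK] with p hp t ht
    rw [hwX hp (Ioo_subset_Icc_self ht.1)]
    exact hasDerivAt_pathThrough_radialField hδ.ne' ht.2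
  · filter_upwards [hPK] with p hp t ht
    rw [hwX hp ht]
    exact norm_radialField_pathThrough_le.trans
      (mul_le_mul_of_nonneg_left ((le_abs_self _).trans (hR p hp)) (norm_nonneg _))

lemma measurable_indicator_radialField_sub {ω : Set (Euc d)} (hω : MeasurableSet ω)
    {v : Euc d → Euc d} (hv : Measurable v) :
    Measurable fun q : Euc d × ℝ => ω.indicator (fun x => radialField o δ x q.2 - v x) q.1 := by
  have hfield : Measurable fun q : Euc d × ℝ => radialField o δ q.1 q.2 - v q.1 := by
    unfold radialField
    fun_prop
  exact hfield.indicator (hω.preimage measurable_fst)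

theorem exact_steering_in_convex_set_general {ω : Set (Euc d)} (hω : MeasurableSet ω)
    {v : Euc d → Euc d} (hv : Measurable v) (hS : Convex ℝ S) (hSω : S ⊆ ω)
    {μ0 μ1 : Measure (Euc d)} [IsProbabilityMeasure μ0] [IsProbabilityMeasure μ1]
    (h0K : IsCompact (msupport μ0)) (h1K : IsCompact (msupport μ1))
    (h0S : msupport μ0 ⊆ S) (h1S : msupport μ1 ⊆ S) (hδ : 0 < δ) :
    ∃ (u : Euc d → ℝ → Euc d) (μ : ℝ → Measure (Euc d)),
      Measurable (fun q : Euc d × ℝ => u q.1 q.2) ∧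
      (∀ x t, x ∉ ω → u x t = 0) ∧
      (∀ t ∈ Icc (0:ℝ) δ, IsCompact (msupport (μ t))) ∧
      IsWeakSolutionOn δ (fun x t => v x + u x t) μ ∧
      μ 0 = μ0 ∧
      (∀ t ∈ Icc (0:ℝ) δ, msupport (μ t) ⊆ S) ∧
      μ δ = μ1 := by
  obtain ⟨o, ho⟩ : S.Nonempty := (ae_mem_msupport μ0).exists.imp h0S
  have hK : IsCompact (msupport μ0 ×ˢ msupport μ1) := h0K.prod h1K
  have hKS : msupport μ0 ×ˢ msupport μ1 ⊆ S ×ˢ S := prod_mono h0S h1S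
  have hPK : ∀ᵐ p ∂μ0.prod μ1, p ∈ msupport μ0 ×ˢ msupport μ1 :=
    (Measure.quasiMeasurePreserving_fst.ae (ae_mem_msupport μ0)).and
      (Measure.quasiMeasurePreserving_snd.ae (ae_mem_msupport μ1))
  have hXt (t : ℝ) : Continuous (pathThrough o (2 / δ * t - 1)) := by fun_prop
  have hu := measurable_indicator_radialField_sub (o := o) (δ := δ) hω hv
  refine ⟨fun x t => ω.indicator (fun x => radialField o δ x t - v x) x,
    fun t => (μ0.prod μ1).map (pathThrough o (2 / δ * t - 1)), hu,
    fun x t hx => indicator_of_notMem hx _, fun t _ => isCompact_msupport_map hK hPK (hXt t),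
    isWeakSolutionOn_map_pathThrough hK hPK hKS hS ho hδ
      ((hv.comp measurable_fst).add hu) fun z hz t => ?_, ?_, fun t ht => ?_, ?_⟩
  · simp only [indicator_of_mem (hSω hz), add_sub_cancel]
  · have hstart : pathThrough o (2 / δ * 0 - 1) = Prod.fst := by
      ext1 p
      simp
    simp only [hstart, Measure.map_fst_prod, measure_univ, one_smul]
  · refine (msupport_map_subset_image hK hPK (hXt t)).trans (image_subset_iff.2 fun p hp => ?_)
    exact pathThrough_mem_of_mem_Icc hS ho (hKS hp) hδ ht
  · have hfinish : pathThrough o (2 / δ * δ - 1) = Prod.snd := by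
      ext1 p
      rw [div_mul_cancel₀ 2 hδ.ne', show (2 : ℝ) - 1 = 1 by norm_num, pathThrough_one]
    simp only [hfinish, Measure.map_snd_prod, measure_univ, one_smul]

end Steering

/-- Exact steering between two measures supported in a nonempty open convex set
`S ⊂⊂ ω`, in time `δ`, with a Borel localized control, keeping the support of
the solution inside `S`. -/
theorem exact_steering_in_convex_set
    (d : ℕ) (ω : Set (Euc d)) (hω : ω.Nonempty) (hωo : IsOpen ω) (hωc : IsConnected ω)
    (v : Euc d → Euc d) (hvL : ∃ K : ℝ≥0, LipschitzWith K v)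
    (hvB : ∃ C : ℝ, ∀ x, ‖v x‖ ≤ C)
    (S : Set (Euc d)) (hS : S.Nonempty) (hSo : IsOpen S) (hSconv : Convex ℝ S)
    (hScp : IsCompact (closure S)) (hScl : closure S ⊆ ω)
    (μ0 μ1 : Measure (Euc d)) [IsProbabilityMeasure μ0] [IsProbabilityMeasure μ1]
    (h0K : IsCompact (msupport μ0)) (h1K : IsCompact (msupport μ1))
    (h0S : msupport μ0 ⊆ S) (h1S : msupport μ1 ⊆ S)
    (δ : ℝ) (hδ : 0 < δ) :
    ∃ (u : Euc d → ℝ → Euc d) (μ : ℝ → Measure (Euc d)),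
      Measurable (fun q : Euc d × ℝ => u q.1 q.2) ∧
      (∀ x t, x ∉ ω → u x t = 0) ∧
      (∀ t ∈ Icc (0:ℝ) δ, IsCompact (msupport (μ t))) ∧
      IsWeakSolutionOn δ (fun x t => v x + u x t) μ ∧
      μ 0 = μ0 ∧
      (∀ t ∈ Icc (0:ℝ) δ, msupport (μ t) ⊆ S) ∧
      μ δ = μ1 := by
  obtain ⟨K, hv⟩ := hvL
  exact exact_steering_in_convex_set_general hωo.measurableSet hv.continuous.measurable hSconv
    (subset_closure.trans hScl) h0K h1K h0S h1S hδ
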